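/- Let m ≥ 2, let α₁,…,α_{m−1}, β₁,…,β_m be real numbers, let 0 < η₁ < η₂ < … < η_m ≤ 1, set μ = 1 − (∑_{i=1}^{m−1} αᵢ(η_{i+1} − ηᵢ) + ∑_{i=1}^{m} βᵢ), and assume μ ≠ 0. Let p : [0,1] → ℝ be continuous and g : ℝ → ℝ be continuous with lim_{|u|→∞} g(u)/u = γ for some real γ, and suppose there exists t₀ ∈ (0,1] with p(t₀) g(0) ≠ 0. Set p* = max_{t∈[0,1]} |p(t)| and M = p* (1 + (1/|μ|) ∑_{i=1}^{m−1} |αᵢ|(η_{i+1} − ηᵢ) + (1/|μ|) ∑_{i=1}^{m} |βᵢ|) ∫₀¹ G(1,s) ds, and assume |γ| < 1/M. Then there exists a six times continuously differentiable function u : [0,1] → ℝ, not identically zero, such that u⁽⁶⁾(t) + p(t) g(u(t)) = 0 for all t ∈ (0,1), u′(0) = u″(0) = u‴(0) = u⁽⁴⁾(0) = 0, u″(1) = 0, and u(0) = ∑_{i=1}^{m−1} αᵢ ∫_{ηᵢ}^{η_{i+1}} u(s) ds + ∑_{i=1}^{m} βᵢ u(ηᵢ). -/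

import Mathlib

open Set intervalIntegral Filter

/-- Green's function `G(t,s)` for the sixth-order problem. -/
noncomputable def G (t s : ℝ) : ℝ :=
  if s ≤ t then (t ^ 5 * (1 - s) ^ 3 - (t - s) ^ 5) / 120
  else t ^ 5 * (1 - s) ^ 3 / 120

/-! For a continuous functional `Λ` on `C[0, 1]` with `Λ 1 ≠ 1`, Green's function `G` turns the
problem `u⁽⁶⁾ + p g(u) = 0`, with the first four derivatives zero at `0`, `u″(1) = 0` and
`u(0) = Λ u`, into a fixed point equation `u = S (p · g(u))` with a compact linear operator `S`.
Since `0 ≤ G(t, s) ≤ G(1, s)`, the norm of `S` is at most `(1 + ‖Λ‖ / |1 - Λ 1|) ∫₀¹ G(1, s) ds`,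
so `|γ| < 1 / M` makes `u ↦ S (p · g(u))` map a large ball of `C[0, 1]` into itself, and
Schauder's theorem gives a fixed point. It is not zero, because `u = 0` would force `p(t) g(0) = 0`
for every `t`.

Schauder's theorem follows from Brouwer's by approximation, and Brouwer's from the Milnor–Rogers
argument: for a `C¹` retraction `r` of the ball onto the sphere, the integral over the ball of the
Jacobian of `x ↦ x + t (r x - x)` is a polynomial in `t`, equal to the volume of the ball for
small `t` but zero for `t = 1`. -/

open MeasureTheory Metric Topology Polynomial
open scoped NNReal unitInterval

/-! ### Brouwer's fixed point theorem -/

section Determinant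

lemma exists_eval_eq_sum_eval_of_natDegree_le (n : ℕ) {δ : ℝ} (hδ : 0 < δ) (x : ℝ) :
    ∃ c t : ℕ → ℝ, (∀ j, t j ∈ Ioc 0 δ) ∧ ∀ P : ℝ[X], P.natDegree ≤ n →
      P.eval x = ∑ j ∈ Finset.range (n + 1), c j * P.eval (t j) := by
  let t : ℕ → ℝ := fun j => δ / (j + 1)
  have ht_inj : Function.Injective t := fun i j hij => by
    simpa [t, div_eq_mul_inv, hδ.ne'] using hij
  refine ⟨fun j => (Lagrange.basis (Finset.range (n + 1)) t j).eval x, t,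
    fun j => ⟨by positivity, div_le_self hδ.le (by simp)⟩, fun P hP => ?_⟩
  have hdeg : P.degree < ((Finset.range (n + 1)).card : WithBot ℕ) := by
    rw [Finset.card_range]
    exact degree_le_natDegree.trans_lt (by exact_mod_cast Nat.lt_succ_of_le hP)
  conv_lhs => rw [Lagrange.eq_interpolate ht_inj.injOn hdeg]
  simp [Lagrange.interpolate_apply, eval_finsetSum, mul_comm]

lemma exists_polynomial_eval_eq_det_one_add_smul {R V : Type*} [CommRing R] [Nontrivial R]
    [AddCommGroup V] [Module R V] [Module.Free R V] [Module.Finite R V] (A : V →ₗ[R] V) :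
    ∃ P : R[X], P.natDegree ≤ Module.finrank R V ∧
      ∀ t : R, P.eval t = LinearMap.det (1 + t • A) := by
  let b := Module.finBasis R V
  let N := LinearMap.toMatrix b b A
  refine ⟨((X : R[X]) • N.map C + (1 : Matrix _ _ R).map C).det, ?_, fun t => ?_⟩
  · simpa using natDegree_det_X_add_C_le N 1
  · rw [← LinearMap.det_toMatrix b, map_add, map_smul, LinearMap.toMatrix_one,
      ← coe_evalRingHom, RingHom.map_det]
    congr 1
    ext i j
    rcases eq_or_ne i j with rfl | hij
    · simp [N, add_comm, mul_comm _ t]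
    · simp [N, hij, mul_comm _ t]

variable {E : Type*} [NormedAddCommGroup E] [NormedSpace ℝ E] [FiniteDimensional ℝ E]

lemma det_id_add_pos {A : E →L[ℝ] E} (hA : ‖A‖ < 1) :
    0 < (ContinuousLinearMap.id ℝ E + A).det := by
  have hne : ∀ s ∈ Icc (0 : ℝ) 1, (ContinuousLinearMap.id ℝ E + s • A).det ≠ 0 := by
    intro s hs
    have hsA : ‖-(s • A)‖ < 1 := by
      rw [norm_neg, norm_smul, Real.norm_of_nonneg hs.1]
      exact (mul_le_of_le_one_left (norm_nonneg A) hs.2).trans_lt hA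
    have hunit : IsUnit (ContinuousLinearMap.id ℝ E + s • A) := by
      simpa [sub_neg_eq_add] using! isUnit_one_sub_of_norm_lt_one hsA
    exact ((hunit.map ContinuousLinearMap.toLinearMapRingHom).map LinearMap.det).ne_zero
  have hcont : ContinuousOn (fun s : ℝ => (ContinuousLinearMap.id ℝ E + s • A).det) (Icc 0 1) :=
    (ContinuousLinearMap.continuous_det.comp (by fun_prop)).continuousOn
  by_contra! hle
  obtain ⟨s, hs, hs0⟩ := intermediate_value_Icc' zero_le_one hcont
    (show (0 : ℝ) ∈ _ from ⟨by simpa using hle, by simp [ContinuousLinearMap.det]⟩)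
  exact hne s hs hs0

lemma isOpen_image_of_hasStrictFDerivAt_of_det_ne_zero {F : E → E} {F' : E → E →L[ℝ] E}
    {s : Set E} (hs : IsOpen s) (hF : ∀ x ∈ s, HasStrictFDerivAt F (F' x) x)
    (hdet : ∀ x ∈ s, (F' x).det ≠ 0) : IsOpen (F '' s) := by
  rw [isOpen_iff_mem_nhds]
  rintro _ ⟨x, hx, rfl⟩
  have hsurj : (F' x : E →ₗ[ℝ] E).range = ⊤ :=
    LinearMap.ker_eq_bot_iff_range_eq_top.1 <| by
      by_contra hker
      exact hdet x hx (LinearMap.det_eq_zero_iff_ker_ne_bot.2 hker)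
  rw [← (hF x hx).map_nhds_eq_of_surj hsurj]
  exact image_mem_map (hs.mem_nhds hx)

lemma image_closedBall_eq_closedBall {F : E → E} {c : E} {r : ℝ} (hr : r ≠ 0)
    (hF : ContinuousOn F (closedBall c r))
    (hmaps : MapsTo F (closedBall c r) (closedBall c r))
    (hfix : ∀ x ∈ sphere c r, F x = x) (hopen : IsOpen (F '' ball c r)) :
    F '' closedBall c r = closedBall c r := by
  have hclosed : IsClosed (F '' closedBall c r) :=
    ((isCompact_closedBall c r).image_of_continuousOn hF).isClosed
  have hball : F '' ball c r ⊆ ball c r := by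
    calc F '' ball c r ⊆ interior (closedBall c r) := interior_maximal
          ((image_mono ball_subset_closedBall).trans hmaps.image_subset) hopen
      _ = ball c r := interior_closedBall c hr
  have hsurj : ball c r ⊆ F '' ball c r := by
    rcases (ball c r).eq_empty_or_nonempty with hempty | hne
    · simp [hempty]
    refine IsPreconnected.subset_left_of_subset_union hopen hclosed.isOpen_compl ?_ ?_ ?_
      (convex_ball c r).isPreconnected
    · exact disjoint_compl_right_iff_subset.2 (image_mono ball_subset_closedBall)
    · intro y hy
      refine or_iff_not_imp_right.2 fun hyF => ?_
      obtain ⟨x, hx, rfl⟩ := notMem_compl_iff.1 hyF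
      rcases (mem_closedBall.1 hx).lt_or_eq with hlt | heq
      · exact mem_image_of_mem F hlt
      · rw [hfix x heq] at hy
        exact absurd heq (mem_ball.1 hy).ne
    · rw [inter_eq_right.2 hball]
      exact hne.image F
  refine hmaps.image_subset.antisymm fun y hy => ?_
  rcases (mem_closedBall.1 hy).lt_or_eq with hlt | heq
  · exact image_mono ball_subset_closedBall (hsurj hlt)
  · exact ⟨y, hy, hfix y heq⟩

/- A perturbation of the identity by a contraction that fixes the sphere is a diffeomorphism of the
ball, so the change of variables formula applies. -/
lemma setIntegral_det_id_add_eq [MeasurableSpace E] [BorelSpace E] (ν : Measure E)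
    [ν.IsAddHaarMeasure] {h : E → E} {h' : E → E →L[ℝ] E} {c : E} {r : ℝ} {K : ℝ≥0} (hr : r ≠ 0)
    (hh : ∀ x ∈ closedBall c r, HasStrictFDerivAt h (h' x) x)
    (hK : ∀ x ∈ closedBall c r, ‖h' x‖₊ ≤ K) (hK1 : K < 1)
    (hmaps : MapsTo (fun x => x + h x) (closedBall c r) (closedBall c r))
    (hsphere : ∀ x ∈ sphere c r, h x = 0) :
    ∫ x in closedBall c r, (ContinuousLinearMap.id ℝ E + h' x).det ∂ν =
      ν.real (closedBall c r) := by
  set B := closedBall c r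
  let F : E → E := fun x => x + h x
  have hF : ∀ x ∈ B, HasStrictFDerivAt F (ContinuousLinearMap.id ℝ E + h' x) x :=
    fun x hx => (hasStrictFDerivAt_id x).add (hh x hx)
  have hpos : ∀ x ∈ B, 0 < (ContinuousLinearMap.id ℝ E + h' x).det := fun x hx =>
    det_id_add_pos (by exact_mod_cast (hK x hx).trans_lt hK1)
  have hLip : LipschitzOnWith K h B :=
    (convex_closedBall c r).lipschitzOnWith_of_nnnorm_hasFDerivWithin_le
      (fun x hx => (hh x hx).hasFDerivAt.hasFDerivWithinAt) hK
  have hinj : InjOn F B := injOn_iff_injective.2 <|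
    ((AntilipschitzWith.subtype_coe B).add_lipschitzWith hLip.to_restrict
      (by simpa using hK1)).injective
  have himage : F '' B = B := by
    refine image_closedBall_eq_closedBall hr
      (fun x hx => (hF x hx).hasFDerivAt.continuousAt.continuousWithinAt) hmaps
      (fun x hx => by simp [F, hsphere x hx]) ?_
    exact isOpen_image_of_hasStrictFDerivAt_of_det_ne_zero isOpen_ball
      (fun x hx => hF x (ball_subset_closedBall hx))
      (fun x hx => (hpos x (ball_subset_closedBall hx)).ne')
  have hB : MeasurableSet B := isClosed_closedBall.measurableSet
  have hchange := integral_image_eq_integral_abs_det_fderiv_smul ν hB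
    (fun x hx => (hF x hx).hasFDerivAt.hasFDerivWithinAt) hinj (fun _ => (1 : ℝ))
  rw [himage] at hchange
  calc ∫ x in B, (ContinuousLinearMap.id ℝ E + h' x).det ∂ν
      = ∫ x in B, |(ContinuousLinearMap.id ℝ E + h' x).det| • (1 : ℝ) ∂ν :=
        setIntegral_congr_fun hB fun x hx => by simp [abs_of_pos (hpos x hx)]
    _ = ν.real B := by rw [← hchange]; simp

end Determinant

section Retraction

variable {E : Type*} [NormedAddCommGroup E] [InnerProductSpace ℝ E]

lemma det_eq_zero_of_eventually_norm_eq [FiniteDimensional ℝ E] {r : E → E} {r' : E →L[ℝ] E}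
    {x : E} (hr : HasFDerivAt r r' x) (hx : r x ≠ 0) (hnorm : ∀ᶠ y in 𝓝 x, ‖r y‖ = ‖r x‖) :
    r'.det = 0 := by
  have hconst : HasFDerivAt (fun y => ‖r y‖ ^ 2) (0 : E →L[ℝ] ℝ) x :=
    (hasFDerivAt_const (‖r x‖ ^ 2) x).congr_of_eventuallyEq (hnorm.mono fun y hy => by simp [hy])
  have horth : ∀ v, inner ℝ (r x) (r' v) = 0 := fun v => by
    simpa using DFunLike.congr_fun (hr.norm_sq.unique hconst) v
  by_contra hdet
  have hker : (r' : E →ₗ[ℝ] E).ker = ⊥ := by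
    by_contra hker
    exact hdet (LinearMap.det_eq_zero_iff_ker_ne_bot.2 hker)
  obtain ⟨v, hv⟩ := LinearMap.range_eq_top.1 (LinearMap.ker_eq_bot_iff_range_eq_top.1 hker) (r x)
  refine hx (inner_self_eq_zero.1 (?_ : inner ℝ (r x) (r x) = 0))
  exact hv ▸ horth v

variable [FiniteDimensional ℝ E]

lemma setIntegral_det_fderiv_eq_zero [MeasurableSpace E] [BorelSpace E] (ν : Measure E)
    [ν.IsAddHaarMeasure] {r : E → E} {r' : E → E →L[ℝ] E}
    (hr : ∀ x ∈ ball (0 : E) 1, HasFDerivAt r (r' x) x)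
    (hnorm : ∀ x ∈ ball (0 : E) 1, ‖r x‖ = 1) :
    ∫ x in closedBall (0 : E) 1, (r' x).det ∂ν = 0 := by
  have hsphere : ∀ᵐ x ∂ν, x ∉ sphere (0 : E) 1 :=
    compl_mem_ae_iff.2 (Measure.addHaar_sphere_of_ne_zero ν 0 one_ne_zero)
  refine setIntegral_eq_zero_of_ae_eq_zero (hsphere.mono fun x hx hxB => ?_)
  have hxb : x ∈ ball (0 : E) 1 :=
    mem_ball.2 (lt_of_le_of_ne (mem_closedBall.1 hxB) fun heq => hx (mem_sphere.2 heq))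
  refine det_eq_zero_of_eventually_norm_eq (hr x hxb) ?_ ?_
  · rw [← norm_ne_zero_iff, hnorm x hxb]
    exact one_ne_zero
  · filter_upwards [isOpen_ball.mem_nhds hxb] with y hy
    rw [hnorm y hy, hnorm x hxb]

lemma exists_setIntegral_det_id_add_smul_eq [MeasurableSpace E] [BorelSpace E] (ν : Measure E)
    [ν.IsAddHaarMeasure] {r : E → E} {A : E → E →L[ℝ] E}
    (hA : ∀ x ∈ closedBall (0 : E) 1, HasStrictFDerivAt (fun y => r y - y) (A x) x)
    (hAc : ContinuousOn A (closedBall (0 : E) 1))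
    (hmaps : MapsTo r (closedBall (0 : E) 1) (closedBall (0 : E) 1))
    (hfix : ∀ x ∈ sphere (0 : E) 1, r x = x) :
    ∃ δ > 0, ∀ t ∈ Ioc (0 : ℝ) δ,
      ∫ x in closedBall (0 : E) 1, (ContinuousLinearMap.id ℝ E + t • A x).det ∂ν =
        ν.real (closedBall (0 : E) 1) := by
  obtain ⟨K, hK⟩ := (isCompact_closedBall (0 : E) 1).exists_bound_of_continuousOn hAc
  refine ⟨(1 + |K|)⁻¹, by positivity, fun t ht => ?_⟩
  have ht0 : 0 < t := ht.1
  have ht1 : t ≤ 1 := ht.2.trans (inv_le_one_of_one_le₀ (by simp))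
  have htK : t * |K| < 1 := by
    have := mul_le_mul_of_nonneg_right ht.2 (show 0 ≤ 1 + |K| by positivity)
    rw [inv_mul_cancel₀ (by positivity)] at this
    linarith
  refine setIntegral_det_id_add_eq ν (h := fun y => t • (r y - y)) (K := (t * |K|).toNNReal)
    one_ne_zero (fun x hx => (hA x hx).const_smul t) (fun x hx => ?_)
    (Real.toNNReal_lt_one.2 htK) ?_ ?_
  · rw [Real.le_toNNReal_iff_coe_le (by positivity), coe_nnnorm, norm_smul,
      Real.norm_of_nonneg ht0.le]
    exact mul_le_mul_of_nonneg_left ((hK x hx).trans (le_abs_self K)) ht0.le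
  · intro x hx
    have hconvex := (convex_closedBall (0 : E) 1) hx (hmaps hx) (sub_nonneg.2 ht1) ht0.le (by ring)
    rwa [show (1 - t) • x + t • r x = x + t • (r x - x) by module] at hconvex
  · intro x hx
    simp [hfix x hx]

theorem exists_mem_sphere_ne_of_contDiffAt (r : E → E)
    (hr : ∀ x ∈ closedBall (0 : E) 1, ContDiffAt ℝ 1 r x)
    (hnorm : ∀ x ∈ closedBall (0 : E) 1, ‖r x‖ = 1) :
    ∃ x ∈ sphere (0 : E) 1, r x ≠ x := by
  by_contra! hfix
  borelize E
  set B := closedBall (0 : E) 1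
  let A : E → E →L[ℝ] E := fderiv ℝ fun y => r y - y
  let D : ℝ → E → ℝ := fun t x => (ContinuousLinearMap.id ℝ E + t • A x).det
  have hdiff : ∀ x ∈ B, ContDiffAt ℝ 1 (fun y => r y - y) x :=
    fun x hx => (hr x hx).sub contDiffAt_id
  have hA : ∀ x ∈ B, HasStrictFDerivAt (fun y => r y - y) (A x) x :=
    fun x hx => (hdiff x hx).hasStrictFDerivAt one_ne_zero
  have hAc : ContinuousOn A B :=
    fun x hx => ((hdiff x hx).continuousAt_fderiv one_ne_zero).continuousWithinAt
  have hDint : ∀ t, IntegrableOn (D t) B := fun t =>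
    (ContinuousLinearMap.continuous_det.comp_continuousOn
      (continuousOn_const.add (hAc.const_smul t))).integrableOn_compact (isCompact_closedBall 0 1)
  obtain ⟨δ, hδ, hvol⟩ := exists_setIntegral_det_id_add_smul_eq volume hA hAc
    (fun x hx => by simp [hnorm x hx]) hfix
  obtain ⟨c, t, ht, hextra⟩ :=
    exists_eval_eq_sum_eval_of_natDegree_le (Module.finrank ℝ E) hδ 1
  have hD1 : ∀ x, D 1 x = ∑ j ∈ Finset.range (Module.finrank ℝ E + 1), c j * D (t j) x := by
    intro x
    obtain ⟨P, hdeg, hP⟩ := exists_polynomial_eval_eq_det_one_add_smul (A x : E →ₗ[ℝ] E)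
    have := hextra P hdeg
    simp only [hP] at this
    exact this
  have hc : ∑ j ∈ Finset.range (Module.finrank ℝ E + 1), c j = 1 := by
    simpa using (hextra 1 (by simp)).symm
  have hvol1 : ∫ x in B, D 1 x = volume.real B := by
    simp_rw [hD1]
    rw [integral_finsetSum _ fun j _ => (hDint (t j)).const_mul (c j)]
    simp_rw [MeasureTheory.integral_const_mul]
    rw [Finset.sum_congr rfl fun j _ => by rw [hvol (t j) (ht j)], ← Finset.sum_mul, hc, one_mul]
  have hvol0 : ∫ x in B, D 1 x = 0 := by
    refine setIntegral_det_fderiv_eq_zero volume (fun x hx => ?_)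
      fun x hx => hnorm x (ball_subset_closedBall hx)
    simpa [Pi.add_def] using (hasFDerivAt_id x).add (hA x (ball_subset_closedBall hx)).hasFDerivAt
  have hBpos : 0 < volume.real B := ENNReal.toReal_pos (measure_closedBall_pos _ _ one_pos).ne'
    (isCompact_closedBall 0 1).measure_lt_top.ne
  exact hBpos.ne' (hvol1 ▸ hvol0)

end Retraction

section RayToSphere

variable {E : Type*} [NormedAddCommGroup E] [InnerProductSpace ℝ E]

/-- A quarter of the discriminant of the quadratic polynomial `‖x + c • u‖² - 1` in `c`. -/
noncomputable def rayDiscrim (x u : E) : ℝ :=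
  inner ℝ x u ^ 2 + ‖u‖ ^ 2 * (1 - ‖x‖ ^ 2)

/-- The point where the ray from the point `x` of the unit ball in the direction `u ≠ 0` leaves the
ball: the larger root `c` of `‖x + c • u‖² = 1` is taken. It is used to retract the ball onto the
sphere. -/
noncomputable def rayToSphere (x u : E) : E :=
  x + ((-inner ℝ x u + √(rayDiscrim x u)) / ‖u‖ ^ 2) • u

lemma rayDiscrim_pos {x u : E} (hx : ‖x‖ ≤ 1) (hu : u ≠ 0)
    (hxu : ‖x‖ = 1 → 0 < inner ℝ x u) : 0 < rayDiscrim x u := by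
  unfold rayDiscrim
  rcases hx.lt_or_eq with hlt | heq
  · have : 0 < 1 - ‖x‖ ^ 2 := by nlinarith [norm_nonneg x]
    positivity
  · have := hxu heq
    rw [heq]
    positivity

lemma norm_rayToSphere {x u : E} (hu : u ≠ 0) (hxu : 0 ≤ rayDiscrim x u) :
    ‖rayToSphere x u‖ = 1 := by
  have hsqrt := Real.sq_sqrt hxu
  have hu0 : ‖u‖ ≠ 0 := norm_ne_zero_iff.2 hu
  rw [← sq_eq_sq₀ (norm_nonneg _) zero_le_one, rayToSphere, norm_add_sq_real, norm_smul, mul_pow,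
    real_inner_smul_right, Real.norm_eq_abs, sq_abs]
  generalize √(rayDiscrim x u) = d at hsqrt ⊢
  rw [rayDiscrim] at hsqrt
  field_simp
  linear_combination hsqrt

lemma rayToSphere_eq_self {x u : E} (hx : ‖x‖ = 1) (hxu : 0 ≤ inner ℝ x u) :
    rayToSphere x u = x := by
  simp [rayToSphere, rayDiscrim, hx, Real.sqrt_sq hxu]

lemma contDiffAt_rayToSphere {v : E → E} {x : E} {n : WithTop ℕ∞} (hv : ContDiffAt ℝ n v x)
    (hvx : v x ≠ 0) (hdiscrim : rayDiscrim x (v x) ≠ 0) :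
    ContDiffAt ℝ n (fun y => rayToSphere y (v y)) x := by
  have hinner : ContDiffAt ℝ n (fun y => (inner ℝ y (v y) : ℝ)) x := contDiffAt_id.inner ℝ hv
  have hd : ContDiffAt ℝ n (fun y => rayDiscrim y (v y)) x :=
    (hinner.pow 2).add ((hv.norm_sq ℝ).mul (contDiffAt_const.sub (contDiffAt_id.norm_sq ℝ)))
  exact contDiffAt_id.add (((hinner.neg.add (hd.sqrt hdiscrim)).div (hv.norm_sq ℝ)
    (pow_ne_zero 2 (norm_ne_zero_iff.2 hvx))).smul hv)

end RayToSphere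

section Brouwer

section InnerProductSpace

variable {E : Type*} [NormedAddCommGroup E] [InnerProductSpace ℝ E] [FiniteDimensional ℝ E]

lemma exists_fixedPoint_of_contDiff {q : E → E} (hq : ContDiff ℝ 1 q) (hq1 : ∀ x, ‖q x‖ < 1) :
    ∃ x, q x = x := by
  by_contra! hfix
  have hne : ∀ x, x - q x ≠ 0 := fun x => sub_ne_zero.2 (hfix x).symm
  have hinner : ∀ x : E, ‖x‖ = 1 → 0 < inner ℝ x (x - q x) := by
    intro x hx
    have := real_inner_le_norm x (q x)
    rw [inner_sub_right, real_inner_self_eq_norm_sq]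
    rw [hx] at *
    linarith [hq1 x]
  have hdiscrim : ∀ x ∈ closedBall (0 : E) 1, 0 < rayDiscrim x (x - q x) := fun x hx =>
    rayDiscrim_pos (mem_closedBall_zero_iff.1 hx) (hne x) (hinner x)
  obtain ⟨x, hx, hxne⟩ := exists_mem_sphere_ne_of_contDiffAt (fun x => rayToSphere x (x - q x))
    (fun x hx => contDiffAt_rayToSphere (contDiffAt_id.sub hq.contDiffAt) (hne x)
      (hdiscrim x hx).ne')
    (fun x hx => norm_rayToSphere (hne x) (hdiscrim x hx).le)
  have hx1 : ‖x‖ = 1 := mem_sphere_zero_iff_norm.1 hx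
  exact hxne (rayToSphere_eq_self hx1 (hinner x hx1).le)

lemma exists_norm_sub_le_of_norm_le_one {f : E → E} (hf : Continuous f) (hf1 : ∀ x, ‖f x‖ ≤ 1)
    {ε : ℝ} (hε : 0 < ε) : ∃ x ∈ closedBall (0 : E) 1, ‖x - f x‖ ≤ 2 * ε := by
  obtain ⟨q, hq, hqf, -⟩ := hf.exists_contDiff_approx (ε := fun _ => ε) 1 continuous_const
    fun _ => hε
  have hε1 : 0 < 1 + ε := by positivity
  have hqn : ∀ x, ‖(1 + ε)⁻¹ • q x‖ < 1 := fun x => by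
    rw [norm_smul, Real.norm_of_nonneg (by positivity), inv_mul_lt_one₀ hε1]
    have := norm_le_norm_add_norm_sub' (q x) (f x)
    have := dist_eq_norm (q x) (f x) ▸ hqf x
    linarith [hf1 x]
  obtain ⟨x, hx⟩ := exists_fixedPoint_of_contDiff (contDiff_const.smul hq) hqn
  have hx1 : ‖x‖ ≤ 1 := hx ▸ (hqn x).le
  have hqx : q x = (1 + ε) • x := (inv_smul_eq_iff₀ hε1.ne').1 hx
  refine ⟨x, mem_closedBall_zero_iff.2 hx1, ?_⟩
  calc ‖x - f x‖ = ‖(q x - f x) - ε • x‖ := by rw [hqx]; congr 1; module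
    _ ≤ ‖q x - f x‖ + ‖ε • x‖ := norm_sub_le _ _
    _ ≤ ε + ε * 1 := by
        rw [norm_smul, Real.norm_of_nonneg hε.le, ← dist_eq_norm]
        exact add_le_add (hqf x).le (mul_le_mul_of_nonneg_left hx1 hε.le)
    _ = 2 * ε := by ring

lemma exists_fixedPoint_of_norm_le_one {f : E → E} (hf : Continuous f) (hf1 : ∀ x, ‖f x‖ ≤ 1) :
    ∃ x, f x = x := by
  obtain ⟨x₀, -, hx₀⟩ := (isCompact_closedBall (0 : E) 1).exists_isMinOn ⟨0, by simp⟩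
    (show ContinuousOn (fun x => ‖x - f x‖) _ by fun_prop)
  by_contra! hfix
  have hpos : 0 < ‖x₀ - f x₀‖ := norm_pos_iff.2 (sub_ne_zero.2 (hfix x₀).symm)
  obtain ⟨x, hx, hxf⟩ := exists_norm_sub_le_of_norm_le_one hf hf1
    (show 0 < ‖x₀ - f x₀‖ / 4 by positivity)
  have : ‖x₀ - f x₀‖ ≤ ‖x - f x‖ := hx₀ hx
  linarith

lemma exists_lipschitzWith_retraction {F : Type*} [NormedAddCommGroup F] [InnerProductSpace ℝ F]
    {C : Set F} (hC : IsComplete C) (hconv : Convex ℝ C) (hne : C.Nonempty) :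
    ∃ π : F → F, LipschitzWith 1 π ∧ (∀ x, π x ∈ C) ∧ ∀ x ∈ C, π x = x := by
  choose π hπC hπ using exists_norm_eq_iInf_of_complete_convex hne hC hconv
  have hobtuse : ∀ x, ∀ w ∈ C, inner ℝ (x - π x) (w - π x) ≤ 0 := fun x =>
    (norm_eq_iInf_iff_real_inner_le_zero hconv (hπC x)).1 (hπ x)
  refine ⟨π, LipschitzWith.of_dist_le_mul fun x y => ?_, hπC, fun x hx => ?_⟩
  · have hinner : ‖π x - π y‖ ^ 2 ≤ inner ℝ (x - y) (π x - π y) := by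
      have hx := hobtuse x _ (hπC y)
      have hy := hobtuse y _ (hπC x)
      rw [← real_inner_self_eq_norm_sq]
      simp only [inner_sub_left, inner_sub_right] at *
      linarith
    have := hinner.trans (real_inner_le_norm _ _)
    rw [NNReal.coe_one, one_mul, dist_eq_norm, dist_eq_norm]
    nlinarith [norm_nonneg (π x - π y), norm_nonneg (x - y)]
  · have := hobtuse x x hx
    exact (sub_eq_zero.1 (inner_self_eq_zero.1 (this.antisymm real_inner_self_nonneg))).symm

lemma exists_fixedPoint_of_isCompact_convex_of_innerProductSpace {C : Set E} (hC : IsCompact C)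
    (hconv : Convex ℝ C) (hne : C.Nonempty) {f : E → E} (hf : ContinuousOn f C)
    (hmaps : MapsTo f C C) : ∃ x ∈ C, f x = x := by
  obtain ⟨π, hπ, hπC, hπid⟩ := exists_lipschitzWith_retraction hC.isComplete hconv hne
  obtain ⟨R, hR, hCR⟩ := hC.isBounded.exists_pos_norm_le
  obtain ⟨x, hx⟩ := exists_fixedPoint_of_norm_le_one (f := fun x => R⁻¹ • f (π (R • x)))
    ((hf.comp_continuous (hπ.continuous.comp (continuous_const_smul R)) fun x =>
      hπC _).const_smul R⁻¹)
    fun x => by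
      rw [norm_smul, norm_inv, Real.norm_of_nonneg hR.le, inv_mul_le_one₀ hR]
      exact hCR _ (hmaps (hπC _))
  have hfx : f (π (R • x)) = R • x := (inv_smul_eq_iff₀ hR.ne').1 hx
  have hRx : R • x ∈ C := hfx ▸ hmaps (hπC _)
  exact ⟨R • x, hRx, by rwa [hπid _ hRx] at hfx⟩

end InnerProductSpace

theorem brouwer_fixedPoint {E : Type*} [AddCommGroup E] [TopologicalSpace E]
    [IsTopologicalAddGroup E] [T2Space E] [Module ℝ E] [ContinuousSMul ℝ E] [FiniteDimensional ℝ E]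
    {C : Set E} (hC : IsCompact C) (hconv : Convex ℝ C) (hne : C.Nonempty) {f : E → E}
    (hf : ContinuousOn f C) (hmaps : MapsTo f C C) : ∃ x ∈ C, f x = x := by
  let e : E ≃L[ℝ] EuclideanSpace ℝ (Fin (Module.finrank ℝ E)) := toEuclidean
  have hsymm : MapsTo e.symm (e '' C) C := by
    rintro _ ⟨x, hx, rfl⟩
    rwa [e.symm_apply_apply]
  obtain ⟨_, ⟨x, hx, rfl⟩, hfx⟩ := exists_fixedPoint_of_isCompact_convex_of_innerProductSpace
    (hC.image e.continuous) (hconv.is_linear_image e.toLinearMap.isLinear) (hne.image e)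
    (f := fun y => e (f (e.symm y)))
    (e.continuous.comp_continuousOn (hf.comp e.symm.continuous.continuousOn hsymm))
    fun y hy => mem_image_of_mem e (hmaps (hsymm hy))
  rw [e.symm_apply_apply] at hfx
  exact ⟨x, hx, e.injective hfx⟩

end Brouwer

/-! ### Schauder's fixed point theorem -/

section Schauder

variable {X : Type*} [NormedAddCommGroup X] [NormedSpace ℝ X]

/- The Schauder projection: the weight of the centre `i` at `x` is proportional to
`max 0 (ε - ‖x - i‖)`, so that only centres within `ε` of `x` contribute. -/
lemma exists_schauderProjection {K : Set X} (hK : IsCompact K) {ε : ℝ} (hε : 0 < ε) :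
    ∃ (s : Finset X) (w : X → s → ℝ), (s : Set X) ⊆ K ∧ ContinuousOn w K ∧
      ∀ x ∈ K, w x ∈ stdSimplex ℝ s ∧ ‖∑ i, w x i • (i : X) - x‖ ≤ ε := by
  obtain ⟨s, hsK, hs, hcover⟩ := hK.finite_cover_balls hε
  lift s to Finset X using hs
  let φ : X → s → ℝ := fun x i => max 0 (ε - ‖x - i‖)
  have hφ : ∀ x i, 0 ≤ φ x i := fun x i => le_max_left _ _
  have hφc : ∀ i, Continuous fun x => φ x i := fun i => by fun_prop
  have hpos : ∀ x ∈ K, 0 < ∑ i, φ x i := by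
    intro x hx
    obtain ⟨i, hi, hxi⟩ := mem_iUnion₂.1 (hcover hx)
    rw [mem_ball, dist_eq_norm] at hxi
    exact Finset.sum_pos' (fun i _ => hφ x i)
      ⟨⟨i, hi⟩, Finset.mem_univ _, lt_max_of_lt_right (sub_pos.2 hxi)⟩
  refine ⟨s, fun x i => φ x i / ∑ j, φ x j, hsK, ?_, fun x hx => ?_⟩
  · exact continuousOn_pi.2 fun i => (hφc i).continuousOn.div
      (continuous_finsetSum _ fun j _ => hφc j).continuousOn fun x hx => (hpos x hx).ne'
  have hsum : ∑ i, φ x i / ∑ j, φ x j = 1 := by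
    rw [← Finset.sum_div, div_self (hpos x hx).ne']
  have hnonneg : ∀ i, 0 ≤ φ x i / ∑ j, φ x j := fun i => div_nonneg (hφ x i) (hpos x hx).le
  refine ⟨⟨hnonneg, hsum⟩, ?_⟩
  have hfar : ∀ i : s, φ x i * ‖(i : X) - x‖ ≤ φ x i * ε := fun i => by
    rcases le_total ‖x - i‖ ε with hi | hi
    · rw [norm_sub_rev]
      exact mul_le_mul_of_nonneg_left hi (hφ x i)
    · simp [φ, hi]
  calc ‖∑ i, (φ x i / ∑ j, φ x j) • (i : X) - x‖
      = ‖∑ i, (φ x i / ∑ j, φ x j) • ((i : X) - x)‖ := by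
        simp_rw [smul_sub, Finset.sum_sub_distrib, ← Finset.sum_smul, hsum, one_smul]
    _ ≤ ∑ i, (φ x i / ∑ j, φ x j) * ε := norm_sum_le_of_le _ fun i _ => by
        rw [norm_smul, Real.norm_of_nonneg (hnonneg i), div_mul_eq_mul_div, div_mul_eq_mul_div]
        exact div_le_div_of_nonneg_right (hfar i) (hpos x hx).le
    _ = ε := by rw [← Finset.sum_mul, hsum, one_mul]

variable {C K : Set X} {T : X → X}

lemma exists_norm_sub_le_of_mapsTo_isCompact (hconv : Convex ℝ C) (hne : C.Nonempty)
    (hK : IsCompact K) (hKC : K ⊆ C) (hT : ContinuousOn T C) (hmaps : MapsTo T C K)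
    {ε : ℝ} (hε : 0 < ε) : ∃ x ∈ C, ‖x - T x‖ ≤ ε := by
  obtain ⟨s, w, hsK, hwc, hw⟩ := exists_schauderProjection hK hε
  let b : (s → ℝ) → X := fun v => ∑ i, v i • (i : X)
  have hb : MapsTo b (stdSimplex ℝ s) C := fun v hv =>
    hconv.sum_mem (fun i _ => hv.1 i) hv.2 fun i _ => hKC (hsK i.2)
  have hbc : Continuous b := by fun_prop
  obtain ⟨x, hx⟩ := hne
  obtain ⟨v, hv, hfix⟩ := brouwer_fixedPoint (isCompact_stdSimplex ℝ s) (convex_stdSimplex ℝ s)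
    ⟨_, (hw _ (hmaps hx)).1⟩ (f := fun v => w (T (b v)))
    (hwc.comp (hT.comp hbc.continuousOn hb) (hmaps.comp hb))
    fun v hv => (hw _ (hmaps (hb hv))).1
  refine ⟨b v, hb hv, ?_⟩
  have := (hw _ (hmaps (hb hv))).2
  rwa [hfix] at this

theorem schauder_fixedPoint (hconv : Convex ℝ C) (hne : C.Nonempty) (hK : IsCompact K)
    (hKC : K ⊆ C) (hT : ContinuousOn T C) (hmaps : MapsTo T C K) : ∃ x ∈ C, T x = x := by
  choose x hxC hx using fun n : ℕ => exists_norm_sub_le_of_mapsTo_isCompact hconv hne hK hKC hT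
    hmaps (ε := 1 / ((n : ℝ) + 1)) (by positivity)
  obtain ⟨z, hz, ψ, hψ, hTx⟩ := hK.tendsto_subseq fun n => hmaps (hxC n)
  have hsub : Tendsto (fun n => x (ψ n) - T (x (ψ n))) atTop (𝓝 0) :=
    squeeze_zero_norm (fun n => hx (ψ n))
      (tendsto_one_div_add_atTop_nhds_zero_nat.comp hψ.tendsto_atTop)
  have hxz : Tendsto (fun n => x (ψ n)) atTop (𝓝[C] z) :=
    tendsto_nhdsWithin_iff.2 ⟨by simpa using hsub.add hTx, Eventually.of_forall fun n => hxC _⟩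
  exact ⟨z, hKC hz, tendsto_nhds_unique ((hT z (hKC hz)).tendsto.comp hxz) hTx⟩

theorem exists_fixedPoint_of_isCompactOperator_comp {Y : Type*} [NormedAddCommGroup Y]
    [NormedSpace ℝ Y] {S : Y →L[ℝ] X} (hS : IsCompactOperator S) {N : X → Y} {R r : ℝ}
    (hR : 0 ≤ R) (hN : ContinuousOn N (closedBall 0 R))
    (hmapsN : MapsTo N (closedBall 0 R) (closedBall 0 r))
    (hmaps : MapsTo (fun v => S (N v)) (closedBall 0 R) (closedBall 0 R)) :
    ∃ v ∈ closedBall 0 R, S (N v) = v :=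
  schauder_fixedPoint (convex_closedBall 0 R) (nonempty_closedBall.2 hR)
    ((hS.isCompact_closure_image_closedBall (f := (S : Y →ₗ[ℝ] X)) r).inter_left
      isClosed_closedBall)
    inter_subset_left (S.continuous.comp_continuousOn hN)
    fun _ hv => ⟨hmaps hv, subset_closure (mem_image_of_mem S (hmapsN hv))⟩

end Schauder

/-! ### Integral operators with continuous kernel -/

lemma isCompact_closure_of_norm_le_of_equicontinuous {X F : Type*} [TopologicalSpace X]
    [CompactSpace X] [NormedAddCommGroup F] [ProperSpace F] {A : Set C(X, F)} {R : ℝ}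
    (hR : ∀ f ∈ A, ‖f‖ ≤ R) (hA : Equicontinuous fun f : A => ⇑(f : C(X, F))) :
    IsCompact (closure A) := by
  let e := ContinuousMap.isometryEquivBoundedOfCompact X F
  have hcompact : IsCompact (closure (e '' A)) := by
    refine BoundedContinuousFunction.arzela_ascoli _ (isCompact_closedBall (0 : F) R) _ ?_ ?_
    · rintro _ x ⟨f, hf, rfl⟩
      exact mem_closedBall_zero_iff.2 ((f.norm_coe_le_norm x).trans (hR f hf))
    · exact hA.comp fun f : e '' A =>
        ⟨e.symm f, by obtain ⟨_, g, hg, rfl⟩ := f; rwa [e.symm_apply_apply]⟩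
  rw [← e.toHomeomorph.isCompact_image, e.toHomeomorph.image_closure]
  exact hcompact

section IntegralOperator

variable {X Y : Type*} [TopologicalSpace X] [CompactSpace X] [TopologicalSpace Y] [CompactSpace Y]
  [MeasurableSpace Y] [BorelSpace Y] (ν : Measure Y) [IsFiniteMeasure ν]

/-- The functional `v ↦ ∫ y, v y ∂ν` on the continuous functions of a compact space. -/
noncomputable def integralFunctional : C(Y, ℝ) →L[ℝ] ℝ :=
  LinearMap.mkContinuous
    { toFun := fun v => ∫ y, v y ∂ν
      map_add' := fun v w => integral_add
        (v.continuous.integrable_of_hasCompactSupport (HasCompactSupport.of_compactSpace v))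
        (w.continuous.integrable_of_hasCompactSupport (HasCompactSupport.of_compactSpace w))
      map_smul' := fun c v => MeasureTheory.integral_const_mul c v }
    (ν.real univ) fun v => by
      rw [mul_comm]
      exact norm_integral_le_of_norm_le_const (Eventually.of_forall v.norm_coe_le_norm)

/-- The operator `v ↦ ∫ y, k (x, y) * v y ∂ν` with continuous kernel `k` on compact spaces. -/
noncomputable def integralOperator (k : C(X × Y, ℝ)) : C(Y, ℝ) →L[ℝ] C(X, ℝ) :=
  LinearMap.mkContinuous
    { toFun := fun v => ⟨fun x => integralFunctional ν (k.curry x * v), by fun_prop⟩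
      map_add' := fun v w => by ext x; simp [mul_add]
      map_smul' := fun c v => by ext x; simp }
    (‖integralFunctional ν‖ * ‖k.curry‖) fun v => by
      refine (ContinuousMap.norm_le _ (by positivity)).2 fun x => ?_
      calc ‖integralFunctional ν (k.curry x * v)‖
          ≤ ‖integralFunctional ν‖ * (‖k.curry x‖ * ‖v‖) :=
            (integralFunctional ν).le_opNorm_of_le (norm_mul_le _ _)
        _ ≤ ‖integralFunctional ν‖ * ‖k.curry‖ * ‖v‖ := by
            rw [← mul_assoc]
            gcongr
            exact k.curry.norm_coe_le_norm x

lemma integralOperator_apply (k : C(X × Y, ℝ)) (v : C(Y, ℝ)) (x : X) :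
    integralOperator ν k v x = ∫ y, k (x, y) * v y ∂ν := rfl

variable {ν} {k : C(X × Y, ℝ)}

lemma norm_integralOperator_apply_le [Nonempty X] {c : ℝ}
    (hc : ∀ x, ∫ y, |k (x, y)| ∂ν ≤ c) (v : C(Y, ℝ)) : ‖integralOperator ν k v‖ ≤ c * ‖v‖ := by
  refine (ContinuousMap.norm_le_of_nonempty _).2 fun x => ?_
  have hint : Integrable (fun y => |k (x, y)| * ‖v‖) ν :=
    Continuous.integrable_of_hasCompactSupport (by fun_prop) (HasCompactSupport.of_compactSpace _)
  calc ‖integralOperator ν k v x‖ ≤ ∫ y, |k (x, y)| * ‖v‖ ∂ν := by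
        refine norm_integral_le_of_norm_le hint (Eventually.of_forall fun y => ?_)
        rw [ContinuousMap.mul_apply, norm_mul]
        exact mul_le_mul_of_nonneg_left (v.norm_coe_le_norm y) (abs_nonneg _)
    _ ≤ c * ‖v‖ := by
        rw [MeasureTheory.integral_mul_const]
        exact mul_le_mul_of_nonneg_right (hc x) (norm_nonneg v)

lemma dist_integralOperator_apply_le (v : C(Y, ℝ)) (x x' : X) :
    dist (integralOperator ν k v x) (integralOperator ν k v x') ≤
      ‖integralFunctional ν‖ * (dist (k.curry x) (k.curry x') * ‖v‖) := by
  calc dist (integralOperator ν k v x) (integralOperator ν k v x')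
      = ‖integralFunctional ν ((k.curry x - k.curry x') * v)‖ := by
        rw [dist_eq_norm, sub_mul, map_sub]
        rfl
    _ ≤ ‖integralFunctional ν‖ * (‖k.curry x - k.curry x'‖ * ‖v‖) :=
        (integralFunctional ν).le_opNorm_of_le (norm_mul_le _ _)
    _ = _ := by rw [dist_eq_norm]

lemma isCompactOperator_integralOperator (k : C(X × Y, ℝ)) :
    IsCompactOperator (integralOperator ν k) := by
  refine (isCompactOperator_iff_image_closedBall_subset_compact _ one_pos).2
    ⟨_, isCompact_closure_of_norm_le_of_equicontinuous (R := ‖integralOperator ν k‖) ?_ ?_,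
      subset_closure⟩
  · rintro _ ⟨v, hv, rfl⟩
    exact (integralOperator ν k).unit_le_opNorm v (mem_closedBall_zero_iff.1 hv)
  · intro x₀
    refine equicontinuousAt_of_continuity_modulus
      (fun x => ‖integralFunctional ν‖ * dist (k.curry x₀) (k.curry x)) ?_ _
      (Eventually.of_forall fun x => ?_)
    · have : Continuous fun x => ‖integralFunctional ν‖ * dist (k.curry x₀) (k.curry x) := by
        fun_prop
      simpa using this.tendsto x₀
    · rintro ⟨_, v, hv, rfl⟩
      refine (dist_integralOperator_apply_le v x₀ x).trans ?_
      exact mul_le_mul_of_nonneg_left (mul_le_of_le_one_right dist_nonneg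
        (mem_closedBall_zero_iff.1 hv)) (by positivity)

end IntegralOperator

/-! ### Repeated primitives -/

section Primitive

variable {F : Type*} [NormedAddCommGroup F] [NormedSpace ℝ F] {h : ℝ → F}

/-- The primitive of `h` that vanishes at `0`. -/
noncomputable def primitive (h : ℝ → F) (t : ℝ) : F := ∫ s in (0 : ℝ)..t, h s

lemma primitive_iterate_succ_zero (h : ℝ → F) (n : ℕ) : primitive^[n + 1] h 0 = 0 := by
  rw [Function.iterate_succ_apply', primitive, intervalIntegral.integral_same]

variable [CompleteSpace F]

lemma hasDerivAt_primitive (hh : Continuous h) (t : ℝ) : HasDerivAt (primitive h) (h t) t :=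
  integral_hasDerivAt_right (hh.intervalIntegrable _ _)
    hh.aestronglyMeasurable.stronglyMeasurableAtFilter hh.continuousAt

lemma deriv_primitive (hh : Continuous h) : deriv (primitive h) = h :=
  funext fun t => (hasDerivAt_primitive hh t).deriv

lemma continuous_primitive_of_continuous (hh : Continuous h) : Continuous (primitive h) :=
  continuous_iff_continuousAt.2 fun t => (hasDerivAt_primitive hh t).continuousAt

lemma continuous_primitive_iterate (hh : Continuous h) (n : ℕ) : Continuous (primitive^[n] h) := by
  induction n with
  | zero => exact hh
  | succ n ih =>
    rw [Function.iterate_succ_apply']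
    exact continuous_primitive_of_continuous ih

lemma contDiff_primitive_iterate (hh : Continuous h) (n : ℕ) :
    ContDiff ℝ n (primitive^[n] h) := by
  induction n with
  | zero => simpa using (contDiff_zero (𝕜 := ℝ)).2 hh
  | succ n ih =>
    have hn := continuous_primitive_iterate hh n
    rw [Function.iterate_succ_apply']
    push_cast
    exact contDiff_succ_iff_deriv.2 ⟨fun t => (hasDerivAt_primitive hn t).differentiableAt,
      by simp, by rwa [deriv_primitive hn]⟩

lemma iteratedDeriv_primitive_iterate (hh : Continuous h) (n k : ℕ) :
    iteratedDeriv k (primitive^[n + k] h) = primitive^[n] h := by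
  induction k with
  | zero => simp
  | succ k ih =>
    rw [iteratedDeriv_succ', ← add_assoc, Function.iterate_succ_apply',
      deriv_primitive (continuous_primitive_iterate hh _), ih]

/-- **Cauchy's formula for repeated integration**. -/
theorem integral_sub_pow_smul_eq_primitive_iterate (hh : Continuous h) (n : ℕ) (t : ℝ) :
    ∫ s in (0 : ℝ)..t, ((t - s) ^ n / (n.factorial : ℝ)) • h s = primitive^[n + 1] h t := by
  induction n generalizing h with
  | zero => simp [primitive]
  | succ n ih =>
    have hderiv : ∀ s ∈ uIcc 0 t,
        HasDerivAt (fun s => (t - s) ^ (n + 1) / ((n + 1).factorial : ℝ))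
          (-((t - s) ^ n / (n.factorial : ℝ))) s := by
      intro s _
      refine ((((hasDerivAt_id s).const_sub t).pow (n + 1)).div_const _).congr_deriv ?_
      rw [Nat.factorial_succ]
      push_cast
      simp
      field_simp
    rw [Function.iterate_succ_apply, ← ih (continuous_primitive_of_continuous hh),
      integral_smul_deriv_eq_deriv_smul hderiv (fun s _ => hasDerivAt_primitive hh s)
        (Continuous.intervalIntegrable (by fun_prop) _ _) (hh.intervalIntegrable _ _)]
    simp [primitive]

end Primitive

lemma iteratedDeriv_const_add_pow_sub_primitive_iterate {h : ℝ → ℝ} (hh : Continuous h)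
    (a c : ℝ) (m n k : ℕ) (t : ℝ) :
    iteratedDeriv (k + 1) (fun t => a + c * t ^ m - primitive^[n + (k + 1)] h t) t =
      c * (m.descFactorial (k + 1) * t ^ (m - (k + 1))) - primitive^[n] h t := by
  have hJ : ContDiff ℝ (k + 1 : ℕ) (primitive^[n + (k + 1)] h) :=
    (contDiff_primitive_iterate hh _).of_le (by exact_mod_cast Nat.le_add_left _ _)
  rw [iteratedDeriv_fun_sub (by fun_prop) hJ.contDiffAt, iteratedDeriv_primitive_iterate hh,
    iteratedDeriv_const_add k.succ_pos, iteratedDeriv_const_mul_field, iteratedDeriv_pow]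

/-! ### Green's function -/

lemma G_eq_max (t s : ℝ) : G t s = (t ^ 5 * (1 - s) ^ 3 - max (t - s) 0 ^ 5) / 120 := by
  rcases le_or_gt s t with hst | hst
  · rw [G, if_pos hst, max_eq_left (sub_nonneg.2 hst)]
  · rw [G, if_neg hst.not_ge, max_eq_right (sub_neg.2 hst).le]
    ring

lemma continuous_uncurry_G : Continuous (Function.uncurry G) := by
  have hG : Function.uncurry G = fun q : ℝ × ℝ =>
      (q.1 ^ 5 * (1 - q.2) ^ 3 - max (q.1 - q.2) 0 ^ 5) / 120 :=
    funext fun q => G_eq_max q.1 q.2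
  rw [hG]
  fun_prop

lemma continuous_G_right (t : ℝ) : Continuous (G t) :=
  continuous_uncurry_G.comp (Continuous.prodMk_right t)

lemma G_nonneg {t s : ℝ} (ht : t ∈ I) (hs : s ∈ I) : 0 ≤ G t s := by
  obtain ⟨ht0, ht1⟩ := ht
  obtain ⟨hs0, hs1⟩ := hs
  have hs1' : 0 ≤ 1 - s := sub_nonneg.2 hs1
  have hmax : max (t - s) 0 ≤ t * (1 - s) := max_le (by nlinarith) (mul_nonneg ht0 hs1')
  have hmax' : max (t - s) 0 ≤ t := max_le (by linarith) ht0
  rw [G_eq_max]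
  refine div_nonneg (sub_nonneg.2 ?_) (by norm_num)
  calc max (t - s) 0 ^ 5 = max (t - s) 0 ^ 3 * max (t - s) 0 ^ 2 := by ring
    _ ≤ (t * (1 - s)) ^ 3 * t ^ 2 := by gcongr
    _ = t ^ 5 * (1 - s) ^ 3 := by ring

lemma G_le_G_one {t s : ℝ} (ht : t ∈ I) (hs : s ∈ I) : G t s ≤ G 1 s := by
  obtain ⟨ht0, ht1⟩ := ht
  obtain ⟨hs0, hs1⟩ := hs
  set a := 1 - s
  have ha0 : 0 ≤ a := sub_nonneg.2 hs1
  suffices a ^ 5 - max (t - s) 0 ^ 5 ≤ a ^ 3 * (1 - t ^ 5) by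
    rw [G_eq_max, G_eq_max, max_eq_left ha0]
    linarith
  rcases le_total t s with hts | hst
  · have hpow : a ^ 2 ≤ 1 - t ^ 5 := by
      have : t ^ 5 ≤ s := (pow_le_of_le_one ht0 ht1 (by norm_num)).trans hts
      nlinarith
    rw [max_eq_right (sub_nonpos.2 hts)]
    calc a ^ 5 - 0 ^ 5 = a ^ 3 * a ^ 2 := by ring
      _ ≤ a ^ 3 * (1 - t ^ 5) := by gcongr
  · set b := t - s
    have hb0 : 0 ≤ b := sub_nonneg.2 hst
    have hba : b ≤ t * a := by nlinarith
    have hat : 0 ≤ a - b := by linarith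
    rw [max_eq_left hb0]
    calc a ^ 5 - b ^ 5
        = (a - b) * (a ^ 4 + a ^ 3 * b + a ^ 2 * b ^ 2 + a * b ^ 3 + b ^ 4) := by ring
      _ ≤ (a - b) * (a ^ 4 + a ^ 3 * (t * a) + a ^ 2 * (t * a) ^ 2 + a * (t * a) ^ 3
            + (t * a) ^ 4) := by gcongr
      _ = a * (a ^ 3 * (1 - t ^ 5)) := by ring
      _ ≤ 1 * (a ^ 3 * (1 - t ^ 5)) := by
          have : 0 ≤ 1 - t ^ 5 := sub_nonneg.2 (pow_le_one₀ ht0 ht1)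
          gcongr
          linarith
      _ = a ^ 3 * (1 - t ^ 5) := one_mul _

lemma integral_max_sub_pow_mul {h : ℝ → ℝ} (hh : Continuous h) {n : ℕ} (hn : n ≠ 0) {t : ℝ}
    (ht : t ∈ I) :
    ∫ s in (0 : ℝ)..1, max (t - s) 0 ^ n * h s = ∫ s in (0 : ℝ)..t, (t - s) ^ n * h s := by
  have hint : ∀ a b, IntervalIntegrable (fun s => max (t - s) 0 ^ n * h s) volume a b :=
    fun a b => Continuous.intervalIntegrable (by fun_prop) _ _
  have hleft : ∫ s in (0 : ℝ)..t, max (t - s) 0 ^ n * h s = ∫ s in (0 : ℝ)..t, (t - s) ^ n * h s :=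
    integral_congr fun s hs => by
      rw [uIcc_of_le ht.1] at hs
      simp only [max_eq_left (sub_nonneg.2 hs.2)]
  have hright : ∫ s in t..1, max (t - s) 0 ^ n * h s = 0 :=
    integral_zero_ae <| Eventually.of_forall fun s hs => by
      rw [uIoc_of_le ht.2] at hs
      rw [max_eq_right (sub_nonpos.2 hs.1.le), zero_pow hn, zero_mul]
  rw [← integral_add_adjacent_intervals (hint 0 t) (hint t 1), hleft, hright, add_zero]

lemma integral_G_mul {h : ℝ → ℝ} (hh : Continuous h) {t : ℝ} (ht : t ∈ I) :
    ∫ s in (0 : ℝ)..1, G t s * h s = primitive^[4] h 1 / 20 * t ^ 5 - primitive^[6] h t := by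
  have hsplit : ∀ s, G t s * h s = t ^ 5 / 20 * (((1 - s) ^ 3 / (Nat.factorial 3 : ℝ)) • h s) -
      max (t - s) 0 ^ 5 * (h s / 120) := fun s => by
    rw [G_eq_max, smul_eq_mul]
    norm_num [Nat.factorial]
    ring
  simp only [hsplit]
  rw [intervalIntegral.integral_sub (Continuous.intervalIntegrable (by fun_prop) _ _)
      (Continuous.intervalIntegrable (by fun_prop) _ _),
    intervalIntegral.integral_const_mul, integral_sub_pow_smul_eq_primitive_iterate hh 3,
    integral_max_sub_pow_mul (by fun_prop) (by norm_num) ht,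
    ← integral_sub_pow_smul_eq_primitive_iterate hh 5]
  congr 1
  · ring
  · refine integral_congr fun s _ => ?_
    norm_num [Nat.factorial]
    ring

/-- The operator `v ↦ ∫₀¹ G(·, s) v(s) ds` on `C[0, 1]`. -/
noncomputable def greenOperator : C(I, ℝ) →L[ℝ] C(I, ℝ) :=
  integralOperator volume ⟨fun q : I × I => G q.1 q.2,
    continuous_uncurry_G.comp (continuous_subtype_val.prodMap continuous_subtype_val)⟩

lemma greenOperator_apply (h : C(I, ℝ)) (t : I) :
    greenOperator h t = ∫ s in (0 : ℝ)..1, G t s * IccExtend zero_le_one h s := by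
  rw [integral_of_le zero_le_one, ← integral_Icc_eq_integral_Ioc,
    ← integral_subtype measurableSet_Icc, greenOperator, integralOperator_apply]
  simp only [IccExtend_val]
  rfl

lemma greenOperator_apply_zero (h : C(I, ℝ)) : greenOperator h 0 = 0 := by
  simp [greenOperator_apply, integral_G_mul h.continuous.Icc_extend', primitive_iterate_succ_zero]

lemma integral_G_le {t : ℝ} (ht : t ∈ I) :
    ∫ s in (0 : ℝ)..1, G t s ≤ ∫ s in (0 : ℝ)..1, G 1 s :=
  intervalIntegral.integral_mono_on zero_le_one ((continuous_G_right t).intervalIntegrable _ _)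
    ((continuous_G_right 1).intervalIntegrable _ _) fun _ hs => G_le_G_one ht hs

lemma integral_G_one_nonneg : 0 ≤ ∫ s in (0 : ℝ)..1, G 1 s :=
  intervalIntegral.integral_nonneg zero_le_one fun _ hs => G_nonneg unitInterval.one_mem hs

lemma norm_greenOperator_apply_le (h : C(I, ℝ)) :
    ‖greenOperator h‖ ≤ (∫ s in (0 : ℝ)..1, G 1 s) * ‖h‖ := by
  refine norm_integralOperator_apply_le (fun t => ?_) h
  calc ∫ s : I, |G t s| = ∫ s : I, G t s := by
        simp only [abs_of_nonneg (G_nonneg t.2 (Subtype.prop _))]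
    _ = ∫ s in (0 : ℝ)..1, G t s := by
        rw [integral_of_le zero_le_one, ← integral_Icc_eq_integral_Ioc,
          ← integral_subtype measurableSet_Icc]
    _ ≤ ∫ s in (0 : ℝ)..1, G 1 s := integral_G_le t.2

lemma isCompactOperator_greenOperator : IsCompactOperator greenOperator :=
  isCompactOperator_integralOperator _

/-- The equation `u⁽⁶⁾ + h = 0` on `[0, 1]` with the boundary conditions
`u'(0) = u''(0) = u'''(0) = u⁽⁴⁾(0) = u''(1) = 0`. The value `u(0)`, on which the nonlocal
condition is imposed, is left free. -/
structure SolvesTwoPointProblem (u : ℝ → ℝ) (h : I → ℝ) : Prop where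
  contDiffOn : ContDiffOn ℝ 6 u I
  deriv_six : ∀ t : I, iteratedDerivWithin 6 u I t + h t = 0
  deriv_one_zero : iteratedDerivWithin 1 u I 0 = 0
  deriv_two_zero : iteratedDerivWithin 2 u I 0 = 0
  deriv_three_zero : iteratedDerivWithin 3 u I 0 = 0
  deriv_four_zero : iteratedDerivWithin 4 u I 0 = 0
  deriv_two_one : iteratedDerivWithin 2 u I 1 = 0

lemma solvesTwoPointProblem_const_add_greenOperator (a : ℝ) (h : C(I, ℝ)) :
    SolvesTwoPointProblem (IccExtend zero_le_one fun t => a + greenOperator h t) h := by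
  set e : ℝ → ℝ := IccExtend zero_le_one h
  have he : Continuous e := h.continuous.Icc_extend'
  set c := primitive^[4] e 1 / 20 with hc
  set w : ℝ → ℝ := fun t => a + c * t ^ 5 - primitive^[6] e t
  have hw : ContDiff ℝ 6 w := by
    have := contDiff_primitive_iterate he 6
    fun_prop
  have heq : EqOn (IccExtend zero_le_one fun t => a + greenOperator h t) w I := fun t ht => by
    rw [IccExtend_of_mem _ _ ht, greenOperator_apply, integral_G_mul he ht]
    ring
  have hderiv : ∀ k n, n + (k + 1) = 6 → ∀ t ∈ I,
      iteratedDerivWithin (k + 1) (IccExtend zero_le_one fun t => a + greenOperator h t) I t =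
        c * ((5).descFactorial (k + 1) * t ^ (5 - (k + 1))) - primitive^[n] e t := by
    intro k n hkn t ht
    rw [iteratedDerivWithin_congr heq ht,
      iteratedDerivWithin_eq_iteratedDeriv (uniqueDiffOn_Icc zero_lt_one)
        (hw.contDiffAt.of_le (by norm_cast; lia)) ht,
      ← iteratedDeriv_const_add_pow_sub_primitive_iterate he a, hkn]
  refine ⟨hw.contDiffOn.congr heq, fun t => ?_, ?_, ?_, ?_, ?_, ?_⟩
  · simp [hderiv 5 0 rfl t t.2, e, Nat.descFactorial]
  · simp [hderiv 0 5 rfl 0 unitInterval.zero_mem, primitive_iterate_succ_zero]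
  · simp [hderiv 1 4 rfl 0 unitInterval.zero_mem, primitive_iterate_succ_zero]
  · simp [hderiv 2 3 rfl 0 unitInterval.zero_mem, primitive_iterate_succ_zero]
  · simp [hderiv 3 2 rfl 0 unitInterval.zero_mem, primitive_iterate_succ_zero]
  · rw [hderiv 1 4 rfl 1 unitInterval.one_mem, hc]
    norm_num [Nat.descFactorial]

/-! ### Nonlocal boundary conditions -/

/-- The solution operator `h ↦ v` of `v⁽⁶⁾ + h = 0` under the boundary conditions of
`SolvesTwoPointProblem` and the nonlocal condition `v 0 = Λ v`, meaningful when `Λ 1 ≠ 1`. -/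
noncomputable def nonlocalGreenOperator (Λ : C(I, ℝ) →L[ℝ] ℝ) : C(I, ℝ) →L[ℝ] C(I, ℝ) :=
  (ContinuousLinearMap.id ℝ C(I, ℝ) + ((1 - Λ 1)⁻¹ • Λ).smulRight 1).comp greenOperator

section NonlocalGreenOperator

variable (Λ : C(I, ℝ) →L[ℝ] ℝ) (h : C(I, ℝ))

lemma nonlocalGreenOperator_apply :
    nonlocalGreenOperator Λ h = greenOperator h + ((1 - Λ 1)⁻¹ * Λ (greenOperator h)) • 1 := rfl

lemma isCompactOperator_nonlocalGreenOperator : IsCompactOperator (nonlocalGreenOperator Λ) := by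
  rw [nonlocalGreenOperator, ContinuousLinearMap.coe_comp]
  exact isCompactOperator_greenOperator.clm_comp _

lemma norm_nonlocalGreenOperator_apply_le :
    ‖nonlocalGreenOperator Λ h‖ ≤
      (1 + ‖Λ‖ / |1 - Λ 1|) * (∫ s in (0 : ℝ)..1, G 1 s) * ‖h‖ := by
  calc ‖nonlocalGreenOperator Λ h‖
      ≤ ‖greenOperator h‖ + ‖(1 - Λ 1)⁻¹ * Λ (greenOperator h)‖ * ‖(1 : C(I, ℝ))‖ := by
        rw [nonlocalGreenOperator_apply, ← norm_smul]
        exact norm_add_le _ _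
    _ ≤ ‖greenOperator h‖ + |1 - Λ 1|⁻¹ * (‖Λ‖ * ‖greenOperator h‖) := by
        rw [norm_one, mul_one, norm_mul, norm_inv, Real.norm_eq_abs (1 - Λ 1)]
        gcongr
        exact Λ.le_opNorm _
    _ = (1 + ‖Λ‖ / |1 - Λ 1|) * ‖greenOperator h‖ := by ring
    _ ≤ (1 + ‖Λ‖ / |1 - Λ 1|) * (∫ s in (0 : ℝ)..1, G 1 s) * ‖h‖ := by
        rw [mul_assoc]
        gcongr
        exact norm_greenOperator_apply_le h

lemma solvesTwoPointProblem_nonlocalGreenOperator :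
    SolvesTwoPointProblem (IccExtend zero_le_one (nonlocalGreenOperator Λ h)) h := by
  convert solvesTwoPointProblem_const_add_greenOperator ((1 - Λ 1)⁻¹ * Λ (greenOperator h)) h
    using 3 with t
  simp [nonlocalGreenOperator_apply, add_comm]

variable {Λ}

lemma nonlocalGreenOperator_apply_zero (hΛ : Λ 1 ≠ 1) :
    nonlocalGreenOperator Λ h 0 = Λ (nonlocalGreenOperator Λ h) := by
  have : 1 - Λ 1 ≠ 0 := sub_ne_zero.2 hΛ.symm
  simp only [nonlocalGreenOperator_apply, ContinuousMap.add_apply, ContinuousMap.smul_apply,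
    ContinuousMap.one_apply, greenOperator_apply_zero, map_add, map_smul, smul_eq_mul]
  field_simp
  ring

end NonlocalGreenOperator

section SuperpositionOperator

variable {X E F : Type*} [TopologicalSpace X]

/-- The superposition (Nemytskii) operator `v ↦ (t ↦ f (t, v t))`. -/
def superpositionOperator [TopologicalSpace E] [TopologicalSpace F] (f : C(X × E, F))
    (v : C(X, E)) : C(X, F) :=
  f.comp ((ContinuousMap.id X).prodMk v)

lemma continuous_superpositionOperator [LocallyCompactSpace X] [TopologicalSpace E]
    [TopologicalSpace F] (f : C(X × E, F)) : Continuous (superpositionOperator f) := by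
  refine ContinuousMap.continuous_of_continuous_uncurry _ ?_
  change Continuous fun q : C(X, E) × X => f (q.2, q.1 q.2)
  fun_prop

lemma exists_mapsTo_superpositionOperator [CompactSpace X] [NormedAddCommGroup E] [ProperSpace E]
    [NormedAddCommGroup F] (f : C(X × E, F)) (R : ℝ) :
    ∃ r, MapsTo (superpositionOperator f) (closedBall 0 R) (closedBall 0 r) := by
  have hcompact : IsCompact ((univ : Set X) ×ˢ closedBall (0 : E) R) :=
    isCompact_univ.prod (isCompact_closedBall 0 R)
  obtain ⟨r, hr⟩ := hcompact.exists_bound_of_continuousOn f.continuous.continuousOn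
  refine ⟨max r 0, fun v hv => mem_closedBall_zero_iff.2 ?_⟩
  refine (ContinuousMap.norm_le _ (le_max_right _ _)).2 fun t => le_max_of_le_left ?_
  exact hr (t, v t) ⟨mem_univ t, mem_closedBall_zero_iff.2
    ((v.norm_coe_le_norm t).trans (mem_closedBall_zero_iff.1 hv))⟩

end SuperpositionOperator

theorem exists_ne_zero_solvesTwoPointProblem {Λ : C(I, ℝ) →L[ℝ] ℝ} (hΛ : Λ 1 ≠ 1)
    {f : C(I × ℝ, ℝ)} (hf : ∃ t, f (t, 0) ≠ 0) {R : ℝ} (hR : 0 ≤ R)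
    (hfR : ∀ t x, |x| ≤ R →
      (1 + ‖Λ‖ / |1 - Λ 1|) * (∫ s in (0 : ℝ)..1, G 1 s) * |f (t, x)| ≤ R) :
    ∃ v : C(I, ℝ), v ≠ 0 ∧ v 0 = Λ v ∧
      SolvesTwoPointProblem (IccExtend zero_le_one v) fun t => f (t, v t) := by
  set c := (1 + ‖Λ‖ / |1 - Λ 1|) * (∫ s in (0 : ℝ)..1, G 1 s)
  let N := superpositionOperator f
  let S := nonlocalGreenOperator Λ
  have hc : 0 ≤ c := mul_nonneg (by positivity) integral_G_one_nonneg
  have hN : ∀ v ∈ closedBall (0 : C(I, ℝ)) R, c * ‖N v‖ ≤ R := fun v hv => by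
    rw [← Real.norm_of_nonneg hc, ← norm_smul]
    refine (ContinuousMap.norm_le _ hR).2 fun t => ?_
    rw [ContinuousMap.smul_apply, norm_smul, Real.norm_of_nonneg hc]
    exact hfR t (v t) ((v.norm_coe_le_norm t).trans (mem_closedBall_zero_iff.1 hv))
  obtain ⟨r, hr⟩ := exists_mapsTo_superpositionOperator f R
  obtain ⟨v, -, hv⟩ : ∃ v ∈ closedBall (0 : C(I, ℝ)) R, S (N v) = v :=
    exists_fixedPoint_of_isCompactOperator_comp (isCompactOperator_nonlocalGreenOperator Λ) hR
      (continuous_superpositionOperator f).continuousOn hr fun v hv =>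
        mem_closedBall_zero_iff.2 ((norm_nonlocalGreenOperator_apply_le Λ (N v)).trans (hN v hv))
  have hsol : SolvesTwoPointProblem (IccExtend zero_le_one v) (N v) := by
    simpa only [S, hv] using solvesTwoPointProblem_nonlocalGreenOperator Λ (N v)
  refine ⟨v, ?_, ?_, hsol⟩
  · rintro rfl
    obtain ⟨t, ht⟩ := hf
    have hzero : IccExtend zero_le_one (0 : C(I, ℝ)) = fun _ => (0 : ℝ) := rfl
    have hsix := hsol.deriv_six t
    rw [hzero, iteratedDerivWithin_const, if_neg (by norm_num), zero_add] at hsix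
    exact ht hsix
  · simpa only [S, hv] using nonlocalGreenOperator_apply_zero (N v) hΛ

lemma exists_forall_norm_le_mul_norm_le {E F : Type*} [SeminormedAddCommGroup E]
    [SeminormedAddCommGroup F] {g : E → F} (hg : Continuous g) {c : ℝ}
    (hc : ∀ᶠ x in cocompact E, c * ‖g x‖ ≤ ‖x‖) :
    ∃ R, 0 ≤ R ∧ ∀ x, ‖x‖ ≤ R → c * ‖g x‖ ≤ R := by
  obtain ⟨K, hK, hKc⟩ := mem_cocompact.1 hc
  obtain ⟨C, hC⟩ := hK.bddAbove_image (f := fun x => c * ‖g x‖) (by fun_prop)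
  refine ⟨max C 0, le_max_right _ _, fun x hx => ?_⟩
  by_cases hxK : x ∈ K
  · exact (hC (mem_image_of_mem _ hxK)).trans (le_max_left _ _)
  · exact (hKc hxK).trans hx

lemma eventually_mul_abs_le_of_tendsto_div {g : ℝ → ℝ} {γ c : ℝ}
    (hγ : Tendsto (fun x => g x / x) (cocompact ℝ) (𝓝 γ)) (hc : c * |γ| < 1) :
    ∀ᶠ x in cocompact ℝ, c * |g x| ≤ |x| := by
  filter_upwards [(hγ.abs.const_mul c).eventually_lt_const hc,
    (isCompact_singleton (x := (0 : ℝ))).compl_mem_cocompact] with x hx hx0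
  rw [abs_div, ← mul_div_assoc, div_lt_one (abs_pos.2 hx0)] at hx
  exact hx.le

theorem exists_ne_zero_solvesTwoPointProblem_mul {Λ : C(I, ℝ) →L[ℝ] ℝ} (hΛ : Λ 1 ≠ 1)
    {p : C(I, ℝ)} {g : C(ℝ, ℝ)} (hpg : ∃ t, p t * g 0 ≠ 0) {γ : ℝ}
    (hγ : Tendsto (fun x => g x / x) (cocompact ℝ) (𝓝 γ))
    (hsmall : ‖p‖ * (1 + ‖Λ‖ / |1 - Λ 1|) * (∫ s in (0 : ℝ)..1, G 1 s) * |γ| < 1) :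
    ∃ v : C(I, ℝ), v ≠ 0 ∧ v 0 = Λ v ∧
      SolvesTwoPointProblem (IccExtend zero_le_one v) fun t => p t * g (v t) := by
  obtain ⟨R, hR, hgR⟩ := exists_forall_norm_le_mul_norm_le g.continuous
    (eventually_mul_abs_le_of_tendsto_div hγ hsmall)
  let f : C(I × ℝ, ℝ) := (p.comp ContinuousMap.fst) * (g.comp ContinuousMap.snd)
  refine exists_ne_zero_solvesTwoPointProblem hΛ (f := f) hpg hR fun t x hx => ?_
  have hG : 0 ≤ ∫ s in (0 : ℝ)..1, G 1 s := integral_G_one_nonneg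
  calc (1 + ‖Λ‖ / |1 - Λ 1|) * (∫ s in (0 : ℝ)..1, G 1 s) * |p t * g x|
      = |p t| * ((1 + ‖Λ‖ / |1 - Λ 1|) * (∫ s in (0 : ℝ)..1, G 1 s) * |g x|) := by
        rw [abs_mul]
        ring
    _ ≤ ‖p‖ * ((1 + ‖Λ‖ / |1 - Λ 1|) * (∫ s in (0 : ℝ)..1, G 1 s) * |g x|) := by
        gcongr
        exact p.norm_coe_le_norm t
    _ = ‖p‖ * (1 + ‖Λ‖ / |1 - Λ 1|) * (∫ s in (0 : ℝ)..1, G 1 s) * ‖g x‖ := by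
        rw [Real.norm_eq_abs]
        ring
    _ ≤ R := hgR x hx

/-- The functional `v ↦ ∫ₐᵇ v(s) ds` on `C[0, 1]`, with `v` extended by its boundary values. -/
noncomputable def intervalIntegralFunctional (a b : ℝ) : C(I, ℝ) →L[ℝ] ℝ :=
  LinearMap.mkContinuous
    { toFun := fun v => ∫ s in a..b, IccExtend zero_le_one v s
      map_add' := fun v w => intervalIntegral.integral_add
        (v.continuous.Icc_extend'.intervalIntegrable _ _)
        (w.continuous.Icc_extend'.intervalIntegrable _ _)
      map_smul' := fun c v => intervalIntegral.integral_const_mul c _ }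
    |b - a| fun v => by
      rw [mul_comm]
      exact intervalIntegral.norm_integral_le_of_norm_le_const fun s _ => v.norm_coe_le_norm _

/-- The right-hand side `v ↦ ∑ᵢ αᵢ ∫_{ηᵢ}^{ηᵢ₊₁} v(s) ds + ∑ᵢ βᵢ v(ηᵢ)` of the nonlocal boundary
condition, with `v` extended from `[0, 1]` to `ℝ` by its boundary values. -/
noncomputable def multipointFunctional (m : ℕ) (α β η : ℕ → ℝ) : C(I, ℝ) →L[ℝ] ℝ :=
  (∑ i ∈ Finset.Icc 1 (m - 1), α i • intervalIntegralFunctional (η i) (η (i + 1))) +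
    ∑ i ∈ Finset.Icc 1 m, β i • ContinuousMap.evalCLM ℝ (projIcc 0 1 zero_le_one (η i))

section MultipointFunctional

variable (m : ℕ) (α β η : ℕ → ℝ)

lemma multipointFunctional_apply (v : C(I, ℝ)) :
    multipointFunctional m α β η v =
      (∑ i ∈ Finset.Icc 1 (m - 1), α i * ∫ s in (η i)..(η (i + 1)), IccExtend zero_le_one v s) +
        ∑ i ∈ Finset.Icc 1 m, β i * IccExtend zero_le_one v (η i) := by
  simp [multipointFunctional, intervalIntegralFunctional, IccExtend]

lemma multipointFunctional_one :
    multipointFunctional m α β η 1 =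
      (∑ i ∈ Finset.Icc 1 (m - 1), α i * (η (i + 1) - η i)) + ∑ i ∈ Finset.Icc 1 m, β i := by
  simp [multipointFunctional_apply, IccExtend]

variable {m η}

lemma norm_multipointFunctional_le (hη : ∀ i, 1 ≤ i → i < m → η i ≤ η (i + 1)) :
    ‖multipointFunctional m α β η‖ ≤
      (∑ i ∈ Finset.Icc 1 (m - 1), |α i| * (η (i + 1) - η i)) + ∑ i ∈ Finset.Icc 1 m, |β i| := by
  have hsub : ∀ i ∈ Finset.Icc 1 (m - 1), 0 ≤ η (i + 1) - η i := fun i hi => by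
    obtain ⟨h1, h2⟩ := Finset.mem_Icc.1 hi
    exact sub_nonneg.2 (hη i h1 (by lia))
  refine ContinuousLinearMap.opNorm_le_bound _ (add_nonneg
    (Finset.sum_nonneg fun i hi => mul_nonneg (abs_nonneg _) (hsub i hi)) (by positivity))
    fun v => ?_
  rw [multipointFunctional_apply, add_mul, Finset.sum_mul, Finset.sum_mul]
  refine norm_add_le_of_le (norm_sum_le_of_le _ fun i hi => ?_) (norm_sum_le_of_le _ fun i _ => ?_)
  · rw [norm_mul, Real.norm_eq_abs, mul_assoc, ← abs_of_nonneg (hsub i hi)]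
    gcongr
    exact (intervalIntegralFunctional _ _).le_of_opNorm_le
      (LinearMap.mkContinuous_norm_le _ (abs_nonneg _) _) v
  · rw [norm_mul, Real.norm_eq_abs]
    gcongr
    exact v.norm_coe_le_norm _

end MultipointFunctional

/-- **Existence of a nontrivial solution** (via the Krasnoselskii–Zabreiko fixed point
theorem): under the asymptotic linearity condition on `g` and the smallness condition
`|γ| < 1/M`, the sixth-order boundary value problem `u⁽⁶⁾ + p(t) g(u) = 0` with the
multi-point and multi-term integral boundary conditions has at least one nontrivial
solution. -/
theorem exists_nontrivial_solution
    (m : ℕ) (hm : 2 ≤ m) (α β η : ℕ → ℝ)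
    (hη0 : 0 < η 1) (hηm : η m ≤ 1)
    (hηmono : ∀ i, 1 ≤ i → i < m → η i < η (i + 1))
    (μ : ℝ)
    (hμdef : μ = 1 - ((∑ i ∈ Finset.Icc 1 (m - 1), α i * (η (i + 1) - η i)) +
      ∑ i ∈ Finset.Icc 1 m, β i))
    (hμ : μ ≠ 0)
    (p : ℝ → ℝ) (hp : ContinuousOn p (Icc 0 1))
    (g : ℝ → ℝ) (hg : Continuous g)
    (γ : ℝ) (hγlim : Tendsto (fun x : ℝ => g x / x) (Filter.cocompact ℝ) (nhds γ))
    (t₀ : ℝ) (ht₀ : t₀ ∈ Ioc (0 : ℝ) 1) (hnz : p t₀ * g 0 ≠ 0)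
    (pstar : ℝ) (hpstar : pstar = sSup ((fun t => |p t|) '' Icc (0 : ℝ) 1))
    (M : ℝ)
    (hM : M = pstar * (1 + (1 / |μ|) * ∑ i ∈ Finset.Icc 1 (m - 1),
            |α i| * (η (i + 1) - η i)
          + (1 / |μ|) * ∑ i ∈ Finset.Icc 1 m, |β i|) * ∫ s in (0 : ℝ)..1, G 1 s)
    (hγ : |γ| < 1 / M) :
    ∃ u : ℝ → ℝ, ContDiffOn ℝ 6 u (Icc 0 1) ∧
      (∃ t ∈ Icc (0 : ℝ) 1, u t ≠ 0) ∧
      (∀ t ∈ Ioo (0 : ℝ) 1, iteratedDerivWithin 6 u (Icc 0 1) t + p t * g (u t) = 0) ∧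
      iteratedDerivWithin 1 u (Icc 0 1) 0 = 0 ∧
      iteratedDerivWithin 2 u (Icc 0 1) 0 = 0 ∧
      iteratedDerivWithin 3 u (Icc 0 1) 0 = 0 ∧
      iteratedDerivWithin 4 u (Icc 0 1) 0 = 0 ∧
      iteratedDerivWithin 2 u (Icc 0 1) 1 = 0 ∧
      u 0 = (∑ i ∈ Finset.Icc 1 (m - 1), α i * ∫ s in (η i)..(η (i + 1)), u s) +
        ∑ i ∈ Finset.Icc 1 m, β i * u (η i) := by
  set Λ := multipointFunctional m α β η
  let P : C(I, ℝ) := ⟨_, hp.domRestrict⟩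
  have hΛ1 : 1 - Λ 1 = μ := by rw [hμdef, multipointFunctional_one]
  have hP : ‖P‖ ≤ pstar := (ContinuousMap.norm_le_of_nonempty P).2 fun t =>
    hpstar ▸ le_csSup (isCompact_Icc.bddAbove_image hp.abs) (mem_image_of_mem _ t.2)
  have hpstar_nonneg : 0 ≤ pstar := (norm_nonneg P).trans hP
  have hsmall : ‖P‖ * (1 + ‖Λ‖ / |1 - Λ 1|) * (∫ s in (0 : ℝ)..1, G 1 s) * |γ| < 1 := by
    have hM_pos : 0 < M := one_div_pos.1 ((abs_nonneg γ).trans_lt hγ)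
    refine lt_of_le_of_lt ?_ ((lt_div_iff₀' hM_pos).1 hγ)
    rw [hM, hΛ1, add_assoc 1, ← mul_add, one_div_mul_eq_div]
    gcongr
    · exact integral_G_one_nonneg
    · exact norm_multipointFunctional_le α β fun i h1 hm => (hηmono i h1 hm).le
  obtain ⟨v, hv, hvΛ, hsol⟩ := exists_ne_zero_solvesTwoPointProblem_mul (Λ := Λ) (p := P)
    (g := ⟨g, hg⟩) (by rwa [ne_comm, ← sub_ne_zero, hΛ1]) ⟨⟨t₀, Ioc_subset_Icc_self ht₀⟩, hnz⟩
    hγlim hsmall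
  obtain ⟨t, ht⟩ := DFunLike.ne_iff.1 hv
  refine ⟨IccExtend zero_le_one v, hsol.contDiffOn, ⟨t, t.2, by simpa using ht⟩, fun t ht => ?_,
    hsol.deriv_one_zero, hsol.deriv_two_zero, hsol.deriv_three_zero, hsol.deriv_four_zero,
    hsol.deriv_two_one, ?_⟩
  · rw [IccExtend_of_mem _ _ (Ioo_subset_Icc_self ht)]
    exact hsol.deriv_six ⟨t, Ioo_subset_Icc_self ht⟩
  · rw [← multipointFunctional_apply, ← hvΛ]
    exact IccExtend_left _ _
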